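/- Let 1/2 < s < 1. Then there exist δ > 0 and C > 0 such that for every k ∈ {1,2,3} and all nonnegative sequences ω⁽¹⁾, ω⁽²⁾, ω⁽³⁾ : ℤ → [0,∞): ( Σ_{n ∈ ℤ} ⟨n⟩^{2(s−1)} ( Σ_{(n₁,n₂,n₃) ∈ ℤ³ : n₁ − n₂ + n₃ = n, n₂ ≠ n₁, n₂ ≠ n₃} |n₂| ⟨φ⟩^{−(1−δ)} ω⁽¹⁾_{n₁} ω⁽²⁾_{n₂} ω⁽³⁾_{n₃} )² )^{1/2} ≤ C ‖ω⁽ᵏ⁾‖_{ℓ²_{s−1}} ∏_{l ∈ {1,2,3}, l ≠ k} ‖ω⁽ˡ⁾‖_{ℓ²_s}. -/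

import Mathlib

open scoped ENNReal NNReal

/-- `⟨x⟩ = (1+x²)^{1/2}`. -/
noncomputable def jbR (x : ℝ) : ℝ := Real.sqrt (1 + x ^ 2)

/-- The weighted `ℓ²_s(ℤ)` norm (valued in `[0,∞]`). -/
noncomputable def l2sZ (s : ℝ) (ω : ℤ → ℝ≥0) : ℝ≥0∞ :=
  (∑' n : ℤ, ENNReal.ofReal (jbR (n : ℝ) ^ (2 * s)) * ((ω n : ℝ≥0∞)) ^ 2) ^ (1/2 : ℝ)

/-- The phase `φ = 2(n₂-n₁)(n₂-n₃)` of the cubic derivative NLS. -/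
def phiDNLS (n₁ n₂ n₃ : ℤ) : ℤ := 2 * (n₂ - n₁) * (n₂ - n₃)

lemma jb_one (x : ℝ) : 1 ≤ jbR x := by
  unfold jbR; rw [Real.one_le_sqrt]; nlinarith [sq_nonneg x]

lemma jb_abs (x : ℝ) : |x| ≤ jbR x := by
  unfold jbR; apply Real.abs_le_sqrt; linarith

lemma jb_add (x y : ℝ) : jbR (x + y) ≤ jbR x + jbR y := by
  have hx := jb_one x
  have hy := jb_one y
  have hx2 : jbR x ^ 2 = 1 + x ^ 2 := Real.sq_sqrt (by positivity)
  have hy2 : jbR y ^ 2 = 1 + y ^ 2 := Real.sq_sqrt (by positivity)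
  have h1 : x * y ≤ jbR x * jbR y := by
    calc x * y ≤ |x * y| := le_abs_self _
      _ = |x| * |y| := abs_mul _ _
      _ ≤ _ := mul_le_mul (jb_abs x) (jb_abs y) (abs_nonneg _) (by linarith)
  rw [show jbR (x + y) = Real.sqrt (1 + (x + y) ^ 2) from rfl, Real.sqrt_le_left (by linarith)]
  nlinarith

lemma jb_neg (x : ℝ) : jbR (-x) = jbR x := by unfold jbR; simp

lemma jb_le_add {x y z : ℝ} (h : x = y + z ∨ x = y - z) : jbR x ≤ jbR y + jbR z := by
  rcases h with h | h
  · rw [h]; exact jb_add y z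
  · have := jb_add y (-z)
    rw [jb_neg] at this
    rw [h, sub_eq_add_neg]; exact this

lemma jb_phi (n₁ n₂ n₃ : ℤ) (h1 : n₂ ≠ n₁) (h3 : n₂ ≠ n₃) :
    jbR ((n₂ - n₁ : ℤ) : ℝ) * jbR ((n₂ - n₃ : ℤ) : ℝ) ≤ jbR ((phiDNLS n₁ n₂ n₃ : ℤ) : ℝ) := by
  unfold phiDNLS jbR
  have ha : (1 : ℝ) ≤ ((n₂ - n₁ : ℤ) : ℝ) ^ 2 := by
    have : (1 : ℤ) ≤ (n₂ - n₁) ^ 2 := by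
      have : n₂ - n₁ ≠ 0 := sub_ne_zero.mpr h1
      have := sq_pos_of_ne_zero this
      omega
    exact_mod_cast this
  have hb : (1 : ℝ) ≤ ((n₂ - n₃ : ℤ) : ℝ) ^ 2 := by
    have : (1 : ℤ) ≤ (n₂ - n₃) ^ 2 := by
      have : n₂ - n₃ ≠ 0 := sub_ne_zero.mpr h3
      have := sq_pos_of_ne_zero this
      omega
    exact_mod_cast this
  rw [← Real.sqrt_mul (by positivity)]
  apply Real.sqrt_le_sqrt
  rw [Int.cast_mul, Int.cast_mul]
  push_cast at *
  set A := ((n₂ : ℝ) - n₁) ^ 2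
  set B := ((n₂ : ℝ) - n₃) ^ 2
  have : (2 * ((n₂ : ℝ) - n₁) * (n₂ - n₃)) ^ 2 = 4 * A * B := by simp only [A, B]; ring
  rw [this]
  nlinarith [mul_nonneg (sub_nonneg.2 ha) (sub_nonneg.2 hb)]

/-- The scalar estimate for `k = 1`. -/
lemma scalar_one {s δ m a b N p q : ℝ} (hs : 1/2 < s) (hs' : s < 1) (hδ : 0 < δ)
    (hδ' : δ ≤ 2 * s - 1)
    (hm : 1 ≤ m) (ha : 1 ≤ a) (hb : 1 ≤ b) (hN : 1 ≤ N) (hp : 1 ≤ p) (hq : 1 ≤ q)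
    (hpN : p ≤ N + b) (hmq : m ≤ q + b) :
    N ^ (s - 1) * m * (a ^ (-(1 - δ)) * b ^ (-(1 - δ))) ≤
      2 * (p ^ (s - 1) * m ^ s * q ^ s) *
        ((a ^ (-(s - δ)) + p ^ (-(s - δ))) * (b ^ (-(s - δ)) + q ^ (-(s - δ)))) := by
  have m0 : 0 < m := by linarith
  have a0 : 0 < a := by linarith
  have b0 : 0 < b := by linarith
  have N0 : 0 < N := by linarith
  have p0 : 0 < p := by linarith
  have q0 : 0 < q := by linarith
  have e1 : m = m ^ s * m ^ (1 - s) := by rw [← Real.rpow_add m0]; simp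
  have e2 : (1:ℝ) = p ^ (s - 1) * p ^ (1 - s) := by rw [← Real.rpow_add p0]; simp
  have h1 : p ^ (1 - s) ≤ 2 * (N ^ (1 - s) * b ^ (1 - s)) := by
    calc p ^ (1 - s) ≤ (2 * (N * b)) ^ (1 - s) := by
          apply Real.rpow_le_rpow p0.le _ (by linarith)
          nlinarith
      _ = 2 ^ (1 - s) * (N ^ (1 - s) * b ^ (1 - s)) := by
          rw [Real.mul_rpow (by norm_num) (by positivity), Real.mul_rpow N0.le b0.le]
      _ ≤ _ := by
          gcongr
          calc (2:ℝ) ^ (1 - s) ≤ 2 ^ (1:ℝ) := Real.rpow_le_rpow_of_exponent_le (by norm_num) (by linarith)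
            _ = 2 := by simp
  have h2 : m ^ (1 - s) ≤ q ^ (1 - s) + b ^ (1 - s) :=
    (Real.rpow_le_rpow m0.le hmq (by linarith)).trans
      (Real.rpow_add_le_add_rpow q0.le b0.le (by linarith) (by linarith))
  have e3 : N ^ (s - 1) * N ^ (1 - s) = 1 := by rw [← Real.rpow_add N0]; simp
  have h3 : a ^ (-(1 - δ)) ≤ a ^ (-(s - δ)) + p ^ (-(s - δ)) := by
    have : a ^ (-(1 - δ)) ≤ a ^ (-(s - δ)) := Real.rpow_le_rpow_of_exponent_le ha (by linarith)
    have : 0 ≤ p ^ (-(s - δ)) := by positivity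
    linarith
  have h4 : b ^ (1 - s) * (q ^ (1 - s) + b ^ (1 - s)) * b ^ (-(1 - δ)) ≤
      q ^ s * (b ^ (-(s - δ)) + q ^ (-(s - δ))) := by
    have x1 : q ^ (1 - s) ≤ q ^ s := Real.rpow_le_rpow_of_exponent_le hq (by linarith)
    have x2 : b ^ (1 - s) * b ^ (-(1 - δ)) = b ^ (-(s - δ)) := by
      rw [← Real.rpow_add b0]; congr 1; ring
    have x3 : b ^ (-(s - δ)) * b ^ (1 - s) ≤ 1 := by
      rw [← Real.rpow_add b0]; exact Real.rpow_le_one_of_one_le_of_nonpos hb (by linarith)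
    have x4 : 1 ≤ q ^ s * q ^ (-(s - δ)) := by
      rw [← Real.rpow_add q0]; exact Real.one_le_rpow hq (by linarith)
    have x5 : 0 < b ^ (-(s - δ)) := by positivity
    calc b ^ (1 - s) * (q ^ (1 - s) + b ^ (1 - s)) * b ^ (-(1 - δ))
        = b ^ (-(s - δ)) * q ^ (1 - s) + b ^ (-(s - δ)) * b ^ (1 - s) := by rw [← x2]; ring
      _ ≤ b ^ (-(s - δ)) * q ^ s + q ^ s * q ^ (-(s - δ)) :=
          add_le_add (by gcongr) (by linarith)
      _ = _ := by ring
  calc N ^ (s - 1) * m * (a ^ (-(1 - δ)) * b ^ (-(1 - δ)))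
      = N ^ (s - 1) * (m ^ s * m ^ (1 - s)) * (p ^ (s - 1) * p ^ (1 - s)) *
          (a ^ (-(1 - δ)) * b ^ (-(1 - δ))) := by rw [← e1, ← e2, mul_one]
    _ ≤ N ^ (s - 1) * (m ^ s * (q ^ (1 - s) + b ^ (1 - s))) *
          (p ^ (s - 1) * (2 * (N ^ (1 - s) * b ^ (1 - s)))) *
          ((a ^ (-(s - δ)) + p ^ (-(s - δ))) * b ^ (-(1 - δ))) := by gcongr
    _ = (N ^ (s - 1) * N ^ (1 - s)) * (2 * p ^ (s - 1) * m ^ s *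
          (a ^ (-(s - δ)) + p ^ (-(s - δ)))) *
          (b ^ (1 - s) * (q ^ (1 - s) + b ^ (1 - s)) * b ^ (-(1 - δ))) := by ring
    _ ≤ (N ^ (s - 1) * N ^ (1 - s)) * (2 * p ^ (s - 1) * m ^ s *
          (a ^ (-(s - δ)) + p ^ (-(s - δ)))) *
          (q ^ s * (b ^ (-(s - δ)) + q ^ (-(s - δ)))) := by gcongr
    _ = _ := by rw [e3]; ring

lemma half_aux {δ m a p : ℝ} (hδ : 0 < δ) (hδ1 : δ < 1) (hm : 1 ≤ m)
    (hmp : m ≤ p + a) (h : 2 * p < m) : a ^ (-(1 - δ)) ≤ 2 * m ^ (-(1 - δ)) := by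
  have m0 : 0 < m := by linarith
  calc a ^ (-(1 - δ)) ≤ (m / 2) ^ (-(1 - δ)) :=
        Real.rpow_le_rpow_of_nonpos (by linarith) (by linarith) (by linarith)
    _ = 2 ^ (1 - δ) * m ^ (-(1 - δ)) := by
        rw [Real.div_rpow m0.le (by norm_num), Real.rpow_neg (by norm_num : (0:ℝ) ≤ 2), div_inv_eq_mul,
          mul_comm]
    _ ≤ _ := by
        gcongr
        calc (2:ℝ) ^ (1 - δ) ≤ 2 ^ (1:ℝ) := Real.rpow_le_rpow_of_exponent_le (by norm_num) (by linarith)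
          _ = 2 := by simp

/-- The scalar estimate for `k = 2`. -/
lemma scalar_two {s δ m a b N p q : ℝ} (hs : 1/2 < s) (hs' : s < 1) (hδ : 0 < δ)
    (hδ' : δ ≤ 2 * s - 1) (hδ2 : 2 * δ ≤ s)
    (hm : 1 ≤ m) (ha : 1 ≤ a) (hb : 1 ≤ b) (hN : 1 ≤ N) (hp : 1 ≤ p) (hq : 1 ≤ q)
    (hpN : p ≤ N + b) (hmq : m ≤ q + b) (hqN : q ≤ N + a) (hmp : m ≤ p + a) :
    N ^ (s - 1) * m * (a ^ (-(1 - δ)) * b ^ (-(1 - δ))) ≤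
      4 * (p ^ s * m ^ (s - 1) * q ^ s) *
        ((a ^ (-(s - δ)) + p ^ (-(s - δ))) * (b ^ (-(s - δ)) + q ^ (-(s - δ)))) := by
  have m0 : 0 < m := by linarith
  have a0 : 0 < a := by linarith
  have b0 : 0 < b := by linarith
  have N0 : 0 < N := by linarith
  have p0 : 0 < p := by linarith
  have q0 : 0 < q := by linarith
  have em : m ^ s = m * m ^ (s - 1) := by
    rw [Real.rpow_sub_one m0.ne']; field_simp
  have ep : p ^ s = p * p ^ (s - 1) := by
    rw [Real.rpow_sub_one p0.ne']; field_simp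
  have eq : q ^ s = q * q ^ (s - 1) := by
    rw [Real.rpow_sub_one q0.ne']; field_simp
  by_cases h1 : m ≤ 2 * p
  · refine (scalar_one hs hs' hδ hδ' hm ha hb hN hp hq hpN hmq).trans ?_
    apply mul_le_mul_of_nonneg_right _ (by positivity)
    calc 2 * (p ^ (s - 1) * m ^ s * q ^ s)
        = 2 * (p ^ (s - 1) * (m * m ^ (s - 1)) * q ^ s) := by rw [← em]
      _ ≤ 2 * (p ^ (s - 1) * ((2 * p) * m ^ (s - 1)) * q ^ s) := by gcongr
      _ = _ := by rw [ep]; ring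
  by_cases h2 : m ≤ 2 * q
  · have := scalar_one hs hs' hδ hδ' hm hb ha hN hq hp hqN hmp
    rw [mul_comm (a ^ (-(1 - δ))), mul_comm (a ^ (-(s - δ)) + p ^ (-(s - δ)))]
    refine this.trans ?_
    apply mul_le_mul_of_nonneg_right _ (by positivity)
    calc 2 * (q ^ (s - 1) * m ^ s * p ^ s)
        = 2 * (q ^ (s - 1) * (m * m ^ (s - 1)) * p ^ s) := by rw [← em]
      _ ≤ 2 * (q ^ (s - 1) * ((2 * q) * m ^ (s - 1)) * p ^ s) := by gcongr
      _ = _ := by rw [eq]; ring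
  push Not at h1 h2
  have ka := half_aux hδ (by linarith) hm hmp h1
  have kb := half_aux hδ (by linarith) hm hmq h2
  have kN : N ^ (s - 1) ≤ 1 := Real.rpow_le_one_of_one_le_of_nonpos hN (by linarith)
  have xp : 1 ≤ p ^ s * (a ^ (-(s - δ)) + p ^ (-(s - δ))) := by
    have : 1 ≤ p ^ s * p ^ (-(s - δ)) := by
      rw [← Real.rpow_add p0]; exact Real.one_le_rpow hp (by linarith)
    have : 0 ≤ p ^ s * a ^ (-(s - δ)) := by positivity
    linarith
  have xq : 1 ≤ q ^ s * (b ^ (-(s - δ)) + q ^ (-(s - δ))) := by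
    have : 1 ≤ q ^ s * q ^ (-(s - δ)) := by
      rw [← Real.rpow_add q0]; exact Real.one_le_rpow hq (by linarith)
    have : 0 ≤ q ^ s * b ^ (-(s - δ)) := by positivity
    linarith
  have xm : m * (m ^ (-(1 - δ)) * m ^ (-(1 - δ))) ≤ m ^ (s - 1) := by
    nth_rw 1 [← Real.rpow_one m]
    rw [← Real.rpow_add m0, ← Real.rpow_add m0]
    exact Real.rpow_le_rpow_of_exponent_le hm (by linarith)
  calc N ^ (s - 1) * m * (a ^ (-(1 - δ)) * b ^ (-(1 - δ)))
      ≤ 1 * m * ((2 * m ^ (-(1 - δ))) * (2 * m ^ (-(1 - δ)))) := by gcongr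
    _ = 4 * (m * (m ^ (-(1 - δ)) * m ^ (-(1 - δ)))) := by ring
    _ ≤ 4 * m ^ (s - 1) := by gcongr
    _ = 4 * m ^ (s - 1) * (1 * 1) := by ring
    _ ≤ 4 * m ^ (s - 1) * ((p ^ s * (a ^ (-(s - δ)) + p ^ (-(s - δ)))) *
          (q ^ s * (b ^ (-(s - δ)) + q ^ (-(s - δ))))) := by gcongr
    _ = _ := by ring

lemma summable_jb {r : ℝ} (hr : 1 < r) : Summable fun n : ℤ => jbR (n : ℝ) ^ (-r) := by
  have h1 : Summable fun n : ℤ => |(n : ℝ)| ^ (-r) := Real.summable_abs_int_rpow hr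
  refine Summable.of_norm_bounded_eventually h1 ?_
  have : ({0} : Set ℤ)ᶜ ∈ Filter.cofinite := (Set.finite_singleton 0).compl_mem_cofinite
  filter_upwards [this] with n hn
  have hn : n ≠ 0 := hn
  have h0 : 0 < |(n : ℝ)| := by positivity
  have := jb_one n
  rw [Real.norm_of_nonneg (by positivity)]
  exact Real.rpow_le_rpow_of_nonpos h0 (jb_abs _) (by linarith)

/-- Cauchy–Schwarz for sums in `[0,∞]`. -/
lemma cs_tsum {ι : Type*} (f g : ι → ℝ≥0∞) :
    (∑' i, f i * g i) ^ 2 ≤ (∑' i, f i ^ 2) * ∑' i, g i ^ 2 := by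
  let _ : MeasurableSpace ι := ⊤
  have h := ENNReal.lintegral_mul_le_Lp_mul_Lq (MeasureTheory.Measure.count : MeasureTheory.Measure ι)
    (Real.HolderConjugate.two_two) (f := f) (g := g)
    (measurable_from_top).aemeasurable (measurable_from_top).aemeasurable
  simp only [MeasureTheory.lintegral_count, Pi.mul_apply] at h
  simp only [ENNReal.rpow_ofNat] at h
  have h2 := pow_le_pow_left' h 2
  refine h2.trans (le_of_eq ?_)
  rw [mul_pow, ← ENNReal.rpow_natCast, ← ENNReal.rpow_natCast, ← ENNReal.rpow_mul,
    ← ENNReal.rpow_mul]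
  norm_num

/-- Duality for `ℓ²` in `[0,∞]`. -/
lemma dual_l2 {ι : Type*} (F : ι → ℝ≥0∞) (D : ℝ≥0∞)
    (h : ∀ g : ι → ℝ≥0∞, (∑' i, g i * F i) ^ 2 ≤ D * ∑' i, g i ^ 2) :
    ∑' i, F i ^ 2 ≤ D := by
  classical
  by_cases hD : D = ⊤
  · simp [hD]
  have hF : ∀ i, F i ≠ ⊤ := by
    intro i hi
    have := h (fun j => if j = i then 1 else 0)
    simp [hi] at this
    exact hD this
  rw [ENNReal.tsum_eq_iSup_sum]
  refine iSup_le fun t => ?_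
  have := h (fun j => if j ∈ t then F j else 0)
  have e1 : ∑' i, (if i ∈ t then F i else 0) * F i = ∑ i ∈ t, F i ^ 2 := by
    rw [tsum_eq_sum (s := t)]
    · exact Finset.sum_congr rfl fun i hi => by simp [hi, sq]
    · intro i hi; simp [hi]
  have e2 : ∑' i, (if i ∈ t then F i else 0) ^ 2 = ∑ i ∈ t, F i ^ 2 := by
    rw [tsum_eq_sum (s := t)]
    · exact Finset.sum_congr rfl fun i hi => by simp [hi]
    · intro i hi; simp [hi]
  rw [e1, e2, sq] at this
  have hX : ∑ i ∈ t, F i ^ 2 ≠ ⊤ := by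
    rw [ENNReal.sum_ne_top]; intro i _; exact ENNReal.pow_ne_top (hF i)
  by_cases h0 : ∑ i ∈ t, F i ^ 2 = 0
  · rw [h0]; exact zero_le
  · exact (ENNReal.mul_le_mul_iff_left h0 hX).1 this

/-- The abstract trilinear bound. -/
lemma abstract_bound (w v₁ v₂ v₃ : ℤ → ℝ≥0∞) (k P : ℤ × ℤ × ℤ → ℝ≥0∞) (D : ℝ≥0∞)
    (hP : ∀ m, ∑' x : ℤ × ℤ, P (x.1, m, x.2) ^ 2 ≤ D)
    (hk : ∀ n₁ n₂ n₃ : ℤ, n₂ ≠ n₁ → n₂ ≠ n₃ →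
      w (n₁ - n₂ + n₃) * k (n₁, n₂, n₃) ≤ v₁ n₁ * v₂ n₂ * v₃ n₃ * P (n₁, n₂, n₃))
    (ω₁ ω₂ ω₃ : ℤ → ℝ≥0∞) :
    ∑' n : ℤ, (w n) ^ 2 * (∑' p : {q : ℤ × ℤ × ℤ //
                q.1 - q.2.1 + q.2.2 = n ∧ q.2.1 ≠ q.1 ∧ q.2.1 ≠ q.2.2},
              k p.1 * ω₁ p.1.1 * ω₂ p.1.2.1 * ω₃ p.1.2.2) ^ 2 ≤
      D * ((∑' n, (v₁ n * ω₁ n) ^ 2) * (∑' n, (v₂ n * ω₂ n) ^ 2) * ∑' n, (v₃ n * ω₃ n) ^ 2) := by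
  simp_rw [← mul_pow]
  apply dual_l2
  intro g
  let Z := Σ n : ℤ, {q : ℤ × ℤ × ℤ // q.1 - q.2.1 + q.2.2 = n ∧ q.2.1 ≠ q.1 ∧ q.2.1 ≠ q.2.2}
  let A : Z → ℝ≥0∞ := fun z => P z.2.1 * (v₂ z.2.1.2.1 * ω₂ z.2.1.2.1)
  let B : Z → ℝ≥0∞ := fun z => g z.1 * (v₁ z.2.1.1 * ω₁ z.2.1.1) * (v₃ z.2.1.2.2 * ω₃ z.2.1.2.2)
  have s1 : ∑' n, g n * (w n * ∑' p : {q : ℤ × ℤ × ℤ //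
                q.1 - q.2.1 + q.2.2 = n ∧ q.2.1 ≠ q.1 ∧ q.2.1 ≠ q.2.2},
              k p.1 * ω₁ p.1.1 * ω₂ p.1.2.1 * ω₃ p.1.2.2) ≤ ∑' z : Z, A z * B z := by
    simp_rw [← ENNReal.tsum_mul_left]
    rw [ENNReal.tsum_sigma' (fun z : Z => A z * B z)]
    refine ENNReal.tsum_le_tsum fun n => ENNReal.tsum_le_tsum fun p => ?_
    obtain ⟨⟨n₁, n₂, n₃⟩, h1, h2, h3⟩ := p
    dsimp only at h1 h2 h3
    have := hk n₁ n₂ n₃ h2 h3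
    rw [h1] at this
    simp only [A, B]
    calc g n * (w n * (k (n₁, n₂, n₃) * ω₁ n₁ * ω₂ n₂ * ω₃ n₃))
        = (w n * k (n₁, n₂, n₃)) * (g n * ω₁ n₁ * ω₂ n₂ * ω₃ n₃) := by ring
      _ ≤ (v₁ n₁ * v₂ n₂ * v₃ n₃ * P (n₁, n₂, n₃)) * (g n * ω₁ n₁ * ω₂ n₂ * ω₃ n₃) := by gcongr
      _ = _ := by ring
  have sA : ∑' z, A z ^ 2 ≤ D * ∑' n, (v₂ n * ω₂ n) ^ 2 := by
    have inj : Function.Injective (fun z : Z => ((z.2.1.2.1, z.2.1.1, z.2.1.2.2) : ℤ × ℤ × ℤ)) := by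
      rintro ⟨n, ⟨n₁, n₂, n₃⟩, h1, h2, h3⟩ ⟨n', ⟨n₁', n₂', n₃'⟩, h1', h2', h3'⟩ h
      simp only [Prod.mk.injEq] at h
      obtain ⟨rfl, rfl, rfl⟩ := h
      dsimp only at h1 h1'
      subst h1; subst h1'; rfl
    have := ENNReal.tsum_comp_le_tsum_of_injective inj
      (fun x : ℤ × ℤ × ℤ => (P (x.2.1, x.1, x.2.2) * (v₂ x.1 * ω₂ x.1)) ^ 2)
    refine this.trans ?_
    rw [ENNReal.tsum_prod', ← ENNReal.tsum_mul_left]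
    refine ENNReal.tsum_le_tsum fun m => ?_
    simp_rw [mul_pow (P _)]
    rw [ENNReal.tsum_mul_right]
    gcongr
    exact hP m
  have sB : ∑' z, B z ^ 2 ≤ (∑' n, g n ^ 2) *
      ((∑' n, (v₁ n * ω₁ n) ^ 2) * ∑' n, (v₃ n * ω₃ n) ^ 2) := by
    have inj : Function.Injective (fun z : Z => ((z.1, z.2.1.1, z.2.1.2.2) : ℤ × ℤ × ℤ)) := by
      rintro ⟨n, ⟨n₁, n₂, n₃⟩, h1, h2, h3⟩ ⟨n', ⟨n₁', n₂', n₃'⟩, h1', h2', h3'⟩ h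
      simp only [Prod.mk.injEq] at h
      obtain ⟨rfl, rfl, rfl⟩ := h
      dsimp only at h1 h1'
      obtain rfl : n₂ = n₂' := by omega
      rfl
    have := ENNReal.tsum_comp_le_tsum_of_injective inj
      (fun x : ℤ × ℤ × ℤ => (g x.1 * (v₁ x.2.1 * ω₁ x.2.1) * (v₃ x.2.2 * ω₃ x.2.2)) ^ 2)
    refine this.trans (le_of_eq ?_)
    have e : ∀ x y z : ℤ, (g x * (v₁ y * ω₁ y) * (v₃ z * ω₃ z)) ^ 2 =
        g x ^ 2 * ((v₁ y * ω₁ y) ^ 2 * (v₃ z * ω₃ z) ^ 2) := fun x y z => by ring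
    simp only [ENNReal.tsum_prod', e, ENNReal.tsum_mul_left, ENNReal.tsum_mul_right]
  calc _ ≤ (∑' z : Z, A z * B z) ^ 2 := by gcongr
    _ ≤ _ := cs_tsum A B
    _ ≤ (D * ∑' n, (v₂ n * ω₂ n) ^ 2) * ((∑' n, g n ^ 2) *
      ((∑' n, (v₁ n * ω₁ n) ^ 2) * ∑' n, (v₃ n * ω₃ n) ^ 2)) := by gcongr
    _ = _ := by ring

/-- The majorant. -/
noncomputable def majP (r : ℝ) (x : ℤ × ℤ × ℤ) : ℝ :=
  (jbR ((x.2.1 - x.1 : ℤ) : ℝ) ^ (-r) + jbR (x.1 : ℝ) ^ (-r)) *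
    (jbR ((x.2.1 - x.2.2 : ℤ) : ℝ) ^ (-r) + jbR (x.2.2 : ℝ) ^ (-r))

lemma maj_sum {r : ℝ} (hr : 1/2 < r) : ∃ D : ℝ, 0 < D ∧ ∀ m : ℤ,
    ∑' x : ℤ × ℤ, ENNReal.ofReal (4 * majP r (x.1, m, x.2)) ^ 2 ≤ ENNReal.ofReal (D ^ 2) := by
  have hsum := summable_jb (r := 2 * r) (by linarith)
  set S := ∑' n : ℤ, jbR (n : ℝ) ^ (-(2 * r)) with hS
  have hS0 : 0 ≤ S := tsum_nonneg fun n => by have := jb_one n; positivity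
  have hSe : ∑' n : ℤ, ENNReal.ofReal (jbR (n : ℝ) ^ (-(2 * r))) = ENNReal.ofReal S := by
    rw [hS, ENNReal.ofReal_tsum_of_nonneg _ hsum]
    intro n; have := jb_one n; positivity
  have key : ∀ m : ℤ, ∑' x : ℤ, ENNReal.ofReal (jbR ((m - x : ℤ) : ℝ) ^ (-r) + jbR (x : ℝ) ^ (-r)) ^ 2
      ≤ ENNReal.ofReal (4 * S) := by
    intro m
    calc _ ≤ ∑' x : ℤ, (2 * ENNReal.ofReal (jbR ((m - x : ℤ) : ℝ) ^ (-(2 * r))) +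
          2 * ENNReal.ofReal (jbR (x : ℝ) ^ (-(2 * r)))) := by
          refine ENNReal.tsum_le_tsum fun x => ?_
          have h1 := jb_one ((m - x : ℤ) : ℝ)
          have h2 := jb_one (x : ℝ)
          have e : ∀ y : ℝ, 1 ≤ y → y ^ (-(2 * r)) = (y ^ (-r)) ^ 2 := by
            intro y hy
            rw [← Real.rpow_natCast, ← Real.rpow_mul (by linarith)]; congr 1; push_cast; ring
          rw [← ENNReal.ofReal_pow (by positivity), show (2 : ℝ≥0∞) = ENNReal.ofReal 2 by simp,
            ← ENNReal.ofReal_mul (by norm_num), ← ENNReal.ofReal_mul (by norm_num),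
            ← ENNReal.ofReal_add (by positivity) (by positivity), e _ h1, e _ h2]
          apply ENNReal.ofReal_le_ofReal
          nlinarith [sq_nonneg (jbR ((m - x : ℤ) : ℝ) ^ (-r) - jbR (x : ℝ) ^ (-r))]
      _ = 2 * ENNReal.ofReal S + 2 * ENNReal.ofReal S := by
          rw [ENNReal.tsum_add, ENNReal.tsum_mul_left, ENNReal.tsum_mul_left, hSe]
          congr 2
          rw [← hSe]
          exact (Equiv.subLeft m).tsum_eq (fun x : ℤ => ENNReal.ofReal (jbR (x : ℝ) ^ (-(2 * r))))
      _ = _ := by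
          rw [ENNReal.ofReal_mul (by norm_num), ← add_mul]; norm_num
  refine ⟨4 * (4 * S) + 1, by positivity, fun m => ?_⟩
  have : ∀ x : ℤ × ℤ, ENNReal.ofReal (4 * majP r (x.1, m, x.2)) ^ 2 =
      ENNReal.ofReal 16 * (ENNReal.ofReal (jbR ((m - x.1 : ℤ) : ℝ) ^ (-r) + jbR (x.1 : ℝ) ^ (-r)) ^ 2 *
       ENNReal.ofReal (jbR ((m - x.2 : ℤ) : ℝ) ^ (-r) + jbR (x.2 : ℝ) ^ (-r)) ^ 2) := by
    intro x
    have h1 := jb_one ((m - x.1 : ℤ) : ℝ)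
    have h2 := jb_one (x.1 : ℝ)
    unfold majP
    rw [ENNReal.ofReal_mul (by norm_num), ENNReal.ofReal_mul (by positivity), mul_pow, mul_pow,
      ← ENNReal.ofReal_pow (by norm_num)]
    norm_num
  simp_rw [this]
  rw [ENNReal.tsum_mul_left, ENNReal.tsum_prod']
  simp_rw [ENNReal.tsum_mul_left, ENNReal.tsum_mul_right]
  calc _ ≤ ENNReal.ofReal 16 * (ENNReal.ofReal (4 * S) * ENNReal.ofReal (4 * S)) := by
        gcongr
        · exact key m
        · exact key m
    _ = ENNReal.ofReal (16 * ((4 * S) * (4 * S))) := by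
        rw [← ENNReal.ofReal_mul (by positivity), ← ENNReal.ofReal_mul (by positivity)]
    _ ≤ _ := by
        apply ENNReal.ofReal_le_ofReal; nlinarith

lemma weight_sq (t : ℝ) (n : ℤ) : ENNReal.ofReal (jbR (n : ℝ) ^ (2 * t)) =
    ENNReal.ofReal (jbR (n : ℝ) ^ t) ^ 2 := by
  have := jb_one (n : ℝ)
  rw [← ENNReal.ofReal_pow (by positivity), ← Real.rpow_natCast, ← Real.rpow_mul (by linarith)]
  congr 2; push_cast; ring

lemma l2s_eq (t : ℝ) (ω : ℤ → ℝ≥0) : l2sZ t ω =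
    (∑' n : ℤ, (ENNReal.ofReal (jbR (n : ℝ) ^ t) * (ω n : ℝ≥0∞)) ^ 2) ^ (1/2 : ℝ) := by
  unfold l2sZ; simp_rw [weight_sq, mul_pow]

lemma final_bound {s δ D t₁ t₂ t₃ : ℝ} (hδ1 : δ < 1) (hD : 0 < D)
    (hP : ∀ m : ℤ, ∑' x : ℤ × ℤ, ENNReal.ofReal (4 * majP (s - δ) (x.1, m, x.2)) ^ 2
      ≤ ENNReal.ofReal (D ^ 2))
    (H : ∀ n₁ n₂ n₃ : ℤ,
      jbR ((n₁ - n₂ + n₃ : ℤ) : ℝ) ^ (s - 1) * jbR (n₂ : ℝ) *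
        (jbR ((n₂ - n₁ : ℤ) : ℝ) ^ (-(1 - δ)) * jbR ((n₂ - n₃ : ℤ) : ℝ) ^ (-(1 - δ))) ≤
      (jbR (n₁ : ℝ) ^ t₁ * jbR (n₂ : ℝ) ^ t₂ * jbR (n₃ : ℝ) ^ t₃) *
        (4 * majP (s - δ) (n₁, n₂, n₃)))
    (ω₁ ω₂ ω₃ : ℤ → ℝ≥0) :
    (∑' n : ℤ, ENNReal.ofReal (jbR (n : ℝ) ^ (2 * (s - 1))) *
            (∑' p : {q : ℤ × ℤ × ℤ //
                q.1 - q.2.1 + q.2.2 = n ∧ q.2.1 ≠ q.1 ∧ q.2.1 ≠ q.2.2},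
              ENNReal.ofReal ((|p.1.2.1| : ℝ) *
                  jbR ((phiDNLS p.1.1 p.1.2.1 p.1.2.2 : ℤ) : ℝ) ^ (-(1 - δ))) *
                (ω₁ p.1.1 : ℝ≥0∞) * (ω₂ p.1.2.1 : ℝ≥0∞) * (ω₃ p.1.2.2 : ℝ≥0∞)) ^ 2) ^ (1/2 : ℝ)
          ≤ ENNReal.ofReal D * (l2sZ t₁ ω₁ * l2sZ t₂ ω₂ * l2sZ t₃ ω₃) := by
  have hj : ∀ n : ℤ, 0 < jbR (n : ℝ) := fun n => by have := jb_one (n : ℝ); linarith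
  have main := abstract_bound (fun n => ENNReal.ofReal (jbR (n : ℝ) ^ (s - 1)))
    (fun n => ENNReal.ofReal (jbR (n : ℝ) ^ t₁)) (fun n => ENNReal.ofReal (jbR (n : ℝ) ^ t₂))
    (fun n => ENNReal.ofReal (jbR (n : ℝ) ^ t₃))
    (fun p => ENNReal.ofReal ((|p.2.1| : ℝ) *
                  jbR ((phiDNLS p.1 p.2.1 p.2.2 : ℤ) : ℝ) ^ (-(1 - δ))))
    (fun p => ENNReal.ofReal (4 * majP (s - δ) p)) (ENNReal.ofReal (D ^ 2)) hP
    (by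
      intro n₁ n₂ n₃ h1 h3
      have p0 := hj n₁
      have p1 := hj n₂
      have p2 := hj n₃
      have p3 := hj (n₁ - n₂ + n₃)
      have p4 := hj (n₂ - n₁)
      have p5 := hj (n₂ - n₃)
      dsimp only
      rw [← ENNReal.ofReal_mul (by positivity), ← ENNReal.ofReal_mul (by positivity),
        ← ENNReal.ofReal_mul (by positivity), ← ENNReal.ofReal_mul (by positivity)]
      apply ENNReal.ofReal_le_ofReal
      refine le_trans ?_ (H n₁ n₂ n₃)
      rw [mul_assoc]
      have a1 := jb_abs (n₂ : ℝ)
      have a2 : jbR ((phiDNLS n₁ n₂ n₃ : ℤ) : ℝ) ^ (-(1 - δ)) ≤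
          jbR ((n₂ - n₁ : ℤ) : ℝ) ^ (-(1 - δ)) * jbR ((n₂ - n₃ : ℤ) : ℝ) ^ (-(1 - δ)) := by
        rw [← Real.mul_rpow p4.le p5.le]
        exact Real.rpow_le_rpow_of_nonpos (by positivity) (jb_phi _ _ _ h1 h3) (by linarith)
      have a3 := hj (phiDNLS n₁ n₂ n₃)
      gcongr)
    (fun n => ω₁ n) (fun n => ω₂ n) (fun n => ω₃ n)
  simp_rw [weight_sq, l2s_eq]
  refine (ENNReal.rpow_le_rpow main (by norm_num)).trans (le_of_eq ?_)
  rw [ENNReal.mul_rpow_of_nonneg _ _ (by norm_num), ENNReal.mul_rpow_of_nonneg _ _ (by norm_num),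
    ENNReal.mul_rpow_of_nonneg _ _ (by norm_num), ENNReal.ofReal_rpow_of_pos (by positivity)]
  congr 2
  rw [← Real.sqrt_eq_rpow, Real.sqrt_sq hD.le]

/-- The estimate (A2) for the gauged derivative NLS: for `1/2 < s < 1`
there are `δ > 0`, `C > 0` such that for each `k ∈ {1,2,3}` the trilinear form with
multiplier `|n₂| ⟨φ⟩^{-(1-δ)}` is bounded in `ℓ²_{s-1}` by
`C ‖ω⁽ᵏ⁾‖_{ℓ²_{s-1}} ∏_{l≠k} ‖ω⁽ˡ⁾‖_{ℓ²_s}`. -/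
theorem DNLS_A2 (s : ℝ) (hs : 1/2 < s) (hs' : s < 1) :
    ∃ δ C : ℝ, 0 < δ ∧ 0 < C ∧
      ∀ (ω₁ ω₂ ω₃ : ℤ → ℝ≥0),
        ((∑' n : ℤ, ENNReal.ofReal (jbR (n : ℝ) ^ (2 * (s - 1))) *
            (∑' p : {q : ℤ × ℤ × ℤ //
                q.1 - q.2.1 + q.2.2 = n ∧ q.2.1 ≠ q.1 ∧ q.2.1 ≠ q.2.2},
              ENNReal.ofReal ((|p.1.2.1| : ℝ) *
                  jbR ((phiDNLS p.1.1 p.1.2.1 p.1.2.2 : ℤ) : ℝ) ^ (-(1 - δ))) *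
                (ω₁ p.1.1 : ℝ≥0∞) * (ω₂ p.1.2.1 : ℝ≥0∞) * (ω₃ p.1.2.2 : ℝ≥0∞)) ^ 2) ^ (1/2 : ℝ)
          ≤ ENNReal.ofReal C * (l2sZ (s - 1) ω₁ * l2sZ s ω₂ * l2sZ s ω₃)) ∧
        ((∑' n : ℤ, ENNReal.ofReal (jbR (n : ℝ) ^ (2 * (s - 1))) *
            (∑' p : {q : ℤ × ℤ × ℤ //
                q.1 - q.2.1 + q.2.2 = n ∧ q.2.1 ≠ q.1 ∧ q.2.1 ≠ q.2.2},
              ENNReal.ofReal ((|p.1.2.1| : ℝ) *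
                  jbR ((phiDNLS p.1.1 p.1.2.1 p.1.2.2 : ℤ) : ℝ) ^ (-(1 - δ))) *
                (ω₁ p.1.1 : ℝ≥0∞) * (ω₂ p.1.2.1 : ℝ≥0∞) * (ω₃ p.1.2.2 : ℝ≥0∞)) ^ 2) ^ (1/2 : ℝ)
          ≤ ENNReal.ofReal C * (l2sZ s ω₁ * l2sZ (s - 1) ω₂ * l2sZ s ω₃)) ∧
        ((∑' n : ℤ, ENNReal.ofReal (jbR (n : ℝ) ^ (2 * (s - 1))) *
            (∑' p : {q : ℤ × ℤ × ℤ //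
                q.1 - q.2.1 + q.2.2 = n ∧ q.2.1 ≠ q.1 ∧ q.2.1 ≠ q.2.2},
              ENNReal.ofReal ((|p.1.2.1| : ℝ) *
                  jbR ((phiDNLS p.1.1 p.1.2.1 p.1.2.2 : ℤ) : ℝ) ^ (-(1 - δ))) *
                (ω₁ p.1.1 : ℝ≥0∞) * (ω₂ p.1.2.1 : ℝ≥0∞) * (ω₃ p.1.2.2 : ℝ≥0∞)) ^ 2) ^ (1/2 : ℝ)
          ≤ ENNReal.ofReal C * (l2sZ s ω₁ * l2sZ s ω₂ * l2sZ (s - 1) ω₃)) := by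
  obtain ⟨D, hD, hP⟩ := maj_sum (r := s - (2 * s - 1) / 4) (by linarith)
  have hδ : 0 < (2 * s - 1) / 4 := by linarith
  refine ⟨(2 * s - 1) / 4, D, hδ, hD, fun ω₁ ω₂ ω₃ => ⟨?_, ?_, ?_⟩⟩
  all_goals
    refine final_bound (by linarith) hD hP ?_ ω₁ ω₂ ω₃
    intro n₁ n₂ n₃
    have k0 := jb_one ((n₁ - n₂ + n₃ : ℤ) : ℝ)
    have k1 := jb_one (n₁ : ℝ)
    have k2 := jb_one (n₂ : ℝ)
    have k3 := jb_one (n₃ : ℝ)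
    have ka := jb_one ((n₂ - n₁ : ℤ) : ℝ)
    have kb := jb_one ((n₂ - n₃ : ℤ) : ℝ)
    have i1 : jbR (n₁ : ℝ) ≤ jbR ((n₁ - n₂ + n₃ : ℤ) : ℝ) + jbR ((n₂ - n₃ : ℤ) : ℝ) :=
      jb_le_add (Or.inl (by push_cast; ring))
    have i2 : jbR (n₃ : ℝ) ≤ jbR ((n₁ - n₂ + n₃ : ℤ) : ℝ) + jbR ((n₂ - n₁ : ℤ) : ℝ) :=
      jb_le_add (Or.inl (by push_cast; ring))
    have i3 : jbR (n₂ : ℝ) ≤ jbR (n₃ : ℝ) + jbR ((n₂ - n₃ : ℤ) : ℝ) :=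
      jb_le_add (Or.inl (by push_cast; ring))
    have i4 : jbR (n₂ : ℝ) ≤ jbR (n₁ : ℝ) + jbR ((n₂ - n₁ : ℤ) : ℝ) :=
      jb_le_add (Or.inl (by push_cast; ring))
    unfold majP
    dsimp only
  · refine (scalar_one hs hs' hδ (by linarith) k2 ka kb k0 k1 k3 i1 i3).trans ?_
    rw [← mul_assoc _ (4 : ℝ), mul_comm _ (4 : ℝ)]
    gcongr
    norm_num
  · refine (scalar_two hs hs' hδ (by linarith) (by linarith) k2 ka kb k0 k1 k3 i1 i3 i2 i4).trans ?_
    rw [← mul_assoc _ (4 : ℝ), mul_comm _ (4 : ℝ)]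
  · rw [mul_comm (jbR ((n₂ - n₁ : ℤ) : ℝ) ^ (-(1 - (2 * s - 1) / 4)))]
    refine (scalar_one hs hs' hδ (by linarith) k2 kb ka k0 k3 k1 i2 i4).trans ?_
    rw [← mul_assoc _ (4 : ℝ), mul_comm _ (4 : ℝ),
      mul_comm (jbR ((n₂ - n₁ : ℤ) : ℝ) ^ (-(s - (2 * s - 1) / 4)) + _),
      show jbR (n₁ : ℝ) ^ s * jbR (n₂ : ℝ) ^ s * jbR (n₃ : ℝ) ^ (s - 1) =
        jbR (n₃ : ℝ) ^ (s - 1) * jbR (n₂ : ℝ) ^ s * jbR (n₁ : ℝ) ^ s by ring]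
    gcongr
    norm_num
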